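/- arXiv:1006.4888 — 2 statements merged into one kernel-verified Lean document; each statement's English description precedes it below -/
import Mathlib

section
/- Let D be a positive integer and let A, B, ψ be D×D complex matrices, where ψ is diagonal with nonnegative real diagonal entries d_0 ≤ d_1 ≤ … ≤ d_{D−1} in increasing order. For an integer n with 0 ≤ n ≤ D, let ψ_n be the diagonal matrix whose j-th diagonal entry equals d_j for j < n and equals 0 for j ≥ n. Then χ_n((AψB)(AψB)†) ≤ tr((Aψ_nB)(Aψ_nB)†), where the trace on the right is a nonnegative real number. -/
open Matrix

/-- `chi hM n` is the sum of the `n` smallest eigenvalues of the Hermitian matrix `M`,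
i.e. the minimum over all `n`-element subsets `s` of the index set of the sum of the
eigenvalues of `M` over `s`. -/
noncomputable def chi {D : ℕ} {M : Matrix (Fin D) (Fin D) ℂ} (hM : M.IsHermitian)
    (n : ℕ) : ℝ :=
  sInf {x : ℝ | ∃ s : Finset (Fin D), s.card = n ∧ x = ∑ i ∈ s, hM.eigenvalues i}

open scoped InnerProductSpace

/-- For every `n` some `n`-element index set sums `f` to at most any weighted sum of `f` whose
weights lie in `[0, 1]` and add up to `n`. -/
theorem exists_card_eq_sum_le_weighted_sum {D n : ℕ} (hn : n ≤ D) (f p : Fin D → ℝ)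
    (hp0 : ∀ j, 0 ≤ p j) (hp1 : ∀ j, p j ≤ 1) (hp : ∑ j, p j = n) :
    ∃ s : Finset (Fin D), s.card = n ∧ ∑ i ∈ s, f i ≤ ∑ j, f j * p j := by
  rcases Nat.eq_zero_or_pos n with rfl | hpos
  · refine ⟨∅, rfl, ?_⟩
    have h : ∀ j, p j = 0 := by
      simpa [Finset.sum_eq_zero_iff_of_nonneg fun j _ => hp0 j] using hp
    simp [h]
  · set σ := Tuple.sort f
    have hσ : Monotone (f ∘ σ) := Tuple.monotone_sort f
    set s : Finset (Fin D) := Finset.univ.map ((Fin.castLEEmb hn).trans σ.toEmbedding)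
    have hs : s.card = n := by simp [s]
    have hmem : ∀ k, σ k ∈ s ↔ (k : ℕ) < n := fun k => by
      simp only [s, Finset.mem_map, Finset.mem_univ, true_and, Function.Embedding.trans_apply,
        Equiv.coe_toEmbedding, EmbeddingLike.apply_eq_iff_eq]
      exact ⟨fun ⟨i, hi⟩ => hi ▸ i.2, fun h => ⟨⟨k, h⟩, rfl⟩⟩
    set c := f (σ ⟨n - 1, by omega⟩)
    have hle : ∀ j ∈ s, f j ≤ c := fun j hj => by
      obtain ⟨k, rfl⟩ := σ.surjective j
      have hk := (hmem k).1 hj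
      exact hσ (show k ≤ ⟨n - 1, by omega⟩ from Fin.mk_le_mk.2 (by omega))
    have hge : ∀ j ∉ s, c ≤ f j := fun j hj => by
      obtain ⟨k, rfl⟩ := σ.surjective j
      have hk := mt (hmem k).2 hj
      exact hσ (show ⟨n - 1, by omega⟩ ≤ k from Fin.mk_le_mk.2 (by omega))
    refine ⟨s, hs, ?_⟩
    have key : 0 ≤ ∑ j, (f j - c) * (p j - if j ∈ s then 1 else 0) := by
      refine Finset.sum_nonneg fun j _ => ?_
      split_ifs with hj
      · exact mul_nonneg_of_nonpos_of_nonpos (by linarith [hle j hj]) (by linarith [hp1 j])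
      · exact mul_nonneg (by linarith [hge j hj]) (by linarith [hp0 j])
    simp only [mul_sub, sub_mul, Finset.sum_sub_distrib, ← Finset.mul_sum, hp] at key
    simp [hs] at key
    linarith

theorem chi_le_of_card_eq {D n : ℕ} {M : Matrix (Fin D) (Fin D) ℂ} (hM : M.IsHermitian)
    (s : Finset (Fin D)) (hs : s.card = n) : chi hM n ≤ ∑ i ∈ s, hM.eigenvalues i := by
  refine csInf_le (Set.Finite.bddBelow ?_) ⟨s, hs, rfl⟩
  refine (Set.finite_range fun t : Finset (Fin D) => ∑ i ∈ t, hM.eigenvalues i).subset ?_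
  rintro x ⟨t, -, rfl⟩
  exact ⟨t, rfl⟩

theorem inner_toEuclideanLin_self_eq_sum {D : ℕ} {M : Matrix (Fin D) (Fin D) ℂ}
    (hM : M.IsHermitian) (x : EuclideanSpace ℂ (Fin D)) :
    (⟪x, toEuclideanLin M x⟫_ℂ).re =
      ∑ j, hM.eigenvalues j * ‖⟪hM.eigenvectorBasis j, x⟫_ℂ‖ ^ 2 := by
  rw [← hM.eigenvectorBasis.sum_inner_mul_inner, Complex.re_sum]
  refine Finset.sum_congr rfl fun j _ => ?_
  have h : toEuclideanLin M (hM.eigenvectorBasis j) =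
      (hM.eigenvalues j : ℂ) • hM.eigenvectorBasis j := by
    ext i
    simpa using congrFun (hM.mulVec_eigenvectorBasis j) i
  rw [← (isSymmetric_toEuclideanLin_iff.mpr hM) (hM.eigenvectorBasis j) x, h, inner_smul_left,
    Complex.conj_ofReal, mul_left_comm, Complex.re_ofReal_mul, ← inner_conj_symm,
    Complex.conj_mul', ← Complex.ofReal_pow, Complex.ofReal_re]

/-- Ky Fan's minimum principle. -/
theorem chi_le_sum_inner {D n : ℕ} {M : Matrix (Fin D) (Fin D) ℂ} (hM : M.IsHermitian)
    {w : Fin n → EuclideanSpace ℂ (Fin D)} (hw : Orthonormal ℂ w) :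
    chi hM n ≤ ∑ i, (⟪w i, toEuclideanLin M (w i)⟫_ℂ).re := by
  have hn : n ≤ D := by simpa using hw.linearIndependent.fintype_card_le_finrank
  obtain ⟨s, hs, hle⟩ := exists_card_eq_sum_le_weighted_sum hn hM.eigenvalues
    (fun j => ∑ i, ‖⟪hM.eigenvectorBasis j, w i⟫_ℂ‖ ^ 2)
    (fun j => by positivity)
    (fun j => by
      simpa [norm_inner_symm] using
        hw.sum_inner_products_le (s := Finset.univ) (hM.eigenvectorBasis j))
    (by
      rw [Finset.sum_comm]
      simp [OrthonormalBasis.sum_sq_norm_inner_right, hw.norm_eq_one])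
  refine (chi_le_of_card_eq hM s hs).trans (hle.trans_eq ?_)
  simp_rw [inner_toEuclideanLin_self_eq_sum hM, Finset.mul_sum]
  exact Finset.sum_comm

theorem trace_mul_conjTranspose_self_eq_sum {D : ℕ} (N : Matrix (Fin D) (Fin D) ℂ) :
    (N * Nᴴ).trace =
      ((∑ k, ‖toEuclideanLin N (EuclideanSpace.basisFun (Fin D) ℂ k)‖ ^ 2 : ℝ) : ℂ) := by
  rw [trace_mul_comm, trace]
  push_cast
  refine Finset.sum_congr rfl fun k _ => ?_
  rw [← Complex.ofReal_pow, EuclideanSpace.norm_sq_eq]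
  simp [mul_apply, ← Complex.conj_mul']

theorem sum_norm_sq_adjoint_le_trace {D n : ℕ} (N : Matrix (Fin D) (Fin D) ℂ)
    {w : Fin n → EuclideanSpace ℂ (Fin D)} (hw : Orthonormal ℂ w) :
    ∑ i, ‖toEuclideanLin Nᴴ (w i)‖ ^ 2 ≤ (N * Nᴴ).trace.re := by
  rw [trace_mul_conjTranspose_self_eq_sum, Complex.ofReal_re]
  simp_rw [← (EuclideanSpace.basisFun (Fin D) ℂ).sum_sq_norm_inner_right (toEuclideanLin Nᴴ _),
    toEuclideanLin_conjTranspose_eq_adjoint, LinearMap.adjoint_inner_right]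
  rw [Finset.sum_comm]
  refine Finset.sum_le_sum fun k _ => ?_
  simpa only [norm_inner_symm] using hw.sum_inner_products_le (s := Finset.univ)
    (toEuclideanLin N (EuclideanSpace.basisFun (Fin D) ℂ k))

theorem exists_orthonormal_toEuclideanLin_eq_zero {D n : ℕ} (R : Matrix (Fin D) (Fin D) ℂ)
    (hR : R.rank + n ≤ D) :
    ∃ w : Fin n → EuclideanSpace ℂ (Fin D), Orthonormal ℂ w ∧
      ∀ i, toEuclideanLin R (w i) = 0 := by
  have hrank : R.rank = Module.finrank ℂ (toEuclideanLin R).range := by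
    rw [toEuclideanLin, toLpLin_eq_toLin]
    exact R.rank_eq_finrank_range_toLin _ _
  have hker := (toEuclideanLin R).finrank_range_add_finrank_ker
  rw [finrank_euclideanSpace_fin] at hker
  have hle : n ≤ Module.finrank ℂ (toEuclideanLin R).ker := by omega
  have hb := (stdOrthonormalBasis ℂ (toEuclideanLin R).ker).orthonormal
  refine ⟨fun i => stdOrthonormalBasis ℂ (toEuclideanLin R).ker (Fin.castLE hle i), ?_,
    fun i => (stdOrthonormalBasis ℂ (toEuclideanLin R).ker (Fin.castLE hle i)).2⟩
  exact (hb.comp_linearIsometry (toEuclideanLin R).ker.subtypeₗᵢ).comp _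
    (Fin.castLE_injective hle)

open scoped ComplexOrder in
/-- The Eckart–Young bound in the Frobenius norm: a perturbation of `M` of rank at most `D - n`
leaves a Hilbert–Schmidt norm squared of at least `chi n` of `M * Mᴴ`. -/
theorem chi_le_trace_of_rank_sub_add_le {D n : ℕ} (M N : Matrix (Fin D) (Fin D) ℂ)
    (h : (M - N).rank + n ≤ D) :
    chi (isHermitian_mul_conjTranspose_self M) n ≤ (N * Nᴴ).trace.re := by
  obtain ⟨w, hw, hw0⟩ := exists_orthonormal_toEuclideanLin_eq_zero (n := n) (M - N)ᴴ
    (by rwa [rank_conjTranspose])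
  refine (chi_le_sum_inner _ hw).trans
    (le_trans (Finset.sum_le_sum fun i _ => le_of_eq ?_) (sum_norm_sq_adjoint_le_trace N hw))
  have hMN : toEuclideanLin Mᴴ (w i) = toEuclideanLin Nᴴ (w i) := by
    rw [← sub_eq_zero, ← LinearMap.sub_apply, ← map_sub, ← conjTranspose_sub, hw0 i]
  rw [toLpLin_mul_same, LinearMap.comp_apply, ← hMN, ← LinearMap.adjoint_inner_left,
    ← toEuclideanLin_conjTranspose_eq_adjoint]
  exact inner_self_eq_norm_sq (𝕜 := ℂ) _

theorem rank_diagonal_sub_truncation_add_le {D n : ℕ} (hn : n ≤ D) (d : Fin D → ℂ) :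
    (diagonal d - diagonal fun j : Fin D => if (j : ℕ) < n then d j else 0).rank + n ≤ D := by
  classical
  rw [diagonal_sub, rank_diagonal, Fintype.card_subtype]
  have hsub : (Finset.univ.filter fun j : Fin D => d j - (if (j : ℕ) < n then d j else 0) ≠ 0) ⊆
      (Finset.univ.map (Fin.castLEEmb hn))ᶜ := by
    intro j hj
    simp only [Finset.mem_compl, Finset.mem_map, not_exists]
    rintro i ⟨-, rfl⟩
    simp at hj
  have hcard := Finset.card_le_card hsub
  rw [Finset.card_compl, Finset.card_map, Finset.card_univ, Fintype.card_fin,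
    Fintype.card_fin] at hcard
  omega

/-- Lemma: if `ψ` is diagonal with nonnegative increasing entries `d_j` and `ψ_n`
retains only the `n` smallest entries, then the sum of the `n` smallest eigenvalues of
`(AψB)(AψB)†` is at most the trace of `(Aψ_nB)(Aψ_nB)†`, a nonnegative real number. -/
theorem chi_le_trace_truncated (D : ℕ) (hD : 0 < D)
    (A B : Matrix (Fin D) (Fin D) ℂ)
    (d : Fin D → ℝ) (hd : ∀ j, 0 ≤ d j) (hmono : Monotone d)
    (n : ℕ) (hn : n ≤ D) :
    ((A * Matrix.diagonal (fun j : Fin D => if (j : ℕ) < n then (d j : ℂ) else 0) * B) *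
        (A * Matrix.diagonal (fun j : Fin D => if (j : ℕ) < n then (d j : ℂ) else 0) * B)ᴴ).trace.im
        = 0 ∧
    0 ≤ ((A * Matrix.diagonal (fun j : Fin D => if (j : ℕ) < n then (d j : ℂ) else 0) * B) *
        (A * Matrix.diagonal (fun j : Fin D => if (j : ℕ) < n then (d j : ℂ) else 0) * B)ᴴ).trace.re ∧
    chi (Matrix.isHermitian_mul_conjTranspose_self
        (A * Matrix.diagonal (fun j : Fin D => (d j : ℂ)) * B)) n ≤
      ((A * Matrix.diagonal (fun j : Fin D => if (j : ℕ) < n then (d j : ℂ) else 0) * B) *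
        (A * Matrix.diagonal (fun j : Fin D => if (j : ℕ) < n then (d j : ℂ) else 0) * B)ᴴ).trace.re := by
  refine ⟨?_, ?_, ?_⟩
  · rw [trace_mul_conjTranspose_self_eq_sum, Complex.ofReal_im]
  · rw [trace_mul_conjTranspose_self_eq_sum, Complex.ofReal_re]
    positivity
  · refine chi_le_trace_of_rank_sub_add_le _ _ (le_trans (Nat.add_le_add_right ?_ n)
      (rank_diagonal_sub_truncation_add_le hn fun j => (d j : ℂ)))
    rw [← Matrix.sub_mul, ← Matrix.mul_sub]
    exact (rank_mul_le_left _ _).trans (rank_mul_le_right _ _)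
end

section
/- For every odd positive integer D and every natural number k, ∑_{j=0}^{D−1} exp(2πi·(j² + kj)/D) = √D · exp(πi/4) · exp(−πi·k²/(2D)) · (1 − i^{2k+D})/√2. -/
open Filter Topology Complex

lemma summable_exp_shifted_gaussian {u : ℂ} (hu : 0 < u.re) (x : ℝ) :
    Summable fun n : ℤ ↦ cexp (-Real.pi * u * ((n : ℂ) + x) ^ 2) := by
  have h := (summable_jacobiTheta₂_term_iff (I * u * x) (I * u)).mpr (by simpa using hu)
  refine (h.mul_left (cexp (-Real.pi * u * x ^ 2))).congr fun n ↦ ?_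
  rw [jacobiTheta₂_term, ← Complex.exp_add]
  congr 1
  ring_nf
  rw [I_sq]
  ring

lemma re_pos_of_inv_re_pos {u : ℂ} (hu : 0 < u⁻¹.re) : 0 < u.re := by
  rw [inv_re] at hu
  by_contra! h
  exact absurd hu (not_lt.mpr (div_nonpos_of_nonpos_of_nonneg h (normSq_nonneg u)))

/-- Poisson summation for a Gaussian with a real shift. -/
lemma sqrt_mul_tsum_exp_shifted_gaussian {u : ℂ} (hu : 0 < u⁻¹.re) (x : ℝ) :
    u ^ (1 / 2 : ℂ) * ∑' n : ℤ, cexp (-Real.pi * u * ((n : ℂ) + x) ^ 2) =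
      ∑' n : ℤ, cexp (-Real.pi * u⁻¹ * (n : ℂ) ^ 2 + 2 * Real.pi * (-I * x) * n) := by
  rw [Complex.tsum_exp_neg_quadratic hu]
  have harg : u.arg ≠ Real.pi := by
    intro h
    have := (Complex.arg_eq_pi_iff.mp h).1
    linarith [re_pos_of_inv_re_pos hu]
  rw [Complex.inv_cpow _ _ harg, one_div (_)⁻¹, inv_inv]
  congr 2
  ext n
  congr 1
  rw [div_inv_eq_mul, show I * (-I * x) = (x : ℂ) by linear_combination (-(x : ℂ)) * I_sq]

lemma tendsto_sqrt_mul_tsum_exp_shifted_gaussian {α : Type*} {l : Filter α} {u : α → ℂ}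
    (hu : Tendsto (fun t ↦ (u t)⁻¹.re) l atTop) (x : ℝ) :
    Tendsto (fun t ↦ u t ^ (1 / 2 : ℂ) *
      ∑' n : ℤ, cexp (-Real.pi * u t * ((n : ℂ) + x) ^ 2)) l (𝓝 1) := by
  have hnorm (t : α) (n : ℤ) :
      ‖cexp (-Real.pi * (u t)⁻¹ * (n : ℂ) ^ 2 + 2 * Real.pi * (-I * x) * n)‖ =
        Real.exp (-(Real.pi * n ^ 2) * (u t)⁻¹.re) := by
    rw [Complex.norm_exp]
    congr 1
    rw [show -Real.pi * (u t)⁻¹ * (n : ℂ) ^ 2 + 2 * Real.pi * (-I * x) * n =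
      ((-(Real.pi * n ^ 2) : ℝ) : ℂ) * (u t)⁻¹ + ((-2 * Real.pi * x * n : ℝ) : ℂ) * I by
        push_cast; ring]
    rw [add_re, re_ofReal_mul, re_ofReal_mul, I_re, mul_zero, add_zero]
  have key : Tendsto (fun t ↦ ∑' n : ℤ,
      cexp (-Real.pi * (u t)⁻¹ * (n : ℂ) ^ 2 + 2 * Real.pi * (-I * x) * n)) l
      (𝓝 (∑' n : ℤ, if n = 0 then 1 else 0)) := by
    have hs := (summable_exp_shifted_gaussian (u := 1) (by simp) 0).norm
    refine tendsto_tsum_of_dominated_convergence hs (fun n ↦ ?_) ?_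
    · split_ifs with hn
      · simpa [hn] using tendsto_const_nhds
      · rw [tendsto_zero_iff_norm_tendsto_zero]
        simp_rw [hnorm]
        have hn' : -(Real.pi * (n : ℝ) ^ 2) < 0 := by
          have : (n : ℝ) ≠ 0 := by exact_mod_cast hn
          have := Real.pi_pos
          simp only [neg_lt_zero]
          positivity
        exact Real.tendsto_exp_atBot.comp (hu.const_mul_atTop_of_neg hn')
    · filter_upwards [hu.eventually_ge_atTop 1] with t ht n
      rw [hnorm, Complex.norm_exp]
      apply Real.exp_le_exp.mpr
      have : (-Real.pi * 1 * ((n : ℂ) + (0 : ℝ)) ^ 2).re = -(Real.pi * (n : ℝ) ^ 2) := by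
        rw [show -Real.pi * 1 * ((n : ℂ) + (0 : ℝ)) ^ 2 = ((-(Real.pi * (n : ℝ) ^ 2) : ℝ) : ℂ) by
          push_cast; ring, ofReal_re]
      rw [this]
      have : 0 ≤ Real.pi * (n : ℝ) ^ 2 := by positivity
      nlinarith
  rw [tsum_ite_eq] at key
  refine key.congr' ?_
  filter_upwards [hu.eventually_gt_atTop 0] with t ht
  exact (sqrt_mul_tsum_exp_shifted_gaussian ht x).symm

/-- The Gaussian mean of a periodic function on `ℤ` tends to the sum over a period. -/
lemma tendsto_sqrt_mul_tsum_periodic_gaussian {α : Type*} {l : Filter α} {u : α → ℂ}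
    (hu : Tendsto (fun t ↦ (u t)⁻¹.re) l atTop) (x : ℝ) {N : ℕ} (hN : 0 < N) {c : ℤ → ℂ}
    (hc : ∀ m j : ℤ, c (m * N + j) = c j) :
    Tendsto (fun t ↦ u t ^ (1 / 2 : ℂ) *
      ∑' n : ℤ, c n * cexp (-Real.pi * (u t / N ^ 2) * ((n : ℂ) + x) ^ 2)) l
      (𝓝 (∑ j ∈ Finset.range N, c j)) := by
  have : NeZero N := ⟨hN.ne'⟩
  have hN0 : (N : ℂ) ≠ 0 := by exact_mod_cast hN.ne'
  have h1 : Tendsto (fun t ↦ ∑ j : Fin N, c (j : ℕ) * (u t ^ (1 / 2 : ℂ) *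
      ∑' m : ℤ, cexp (-Real.pi * u t * ((m : ℂ) + (((j : ℕ) + x) / N : ℝ)) ^ 2))) l
      (𝓝 (∑ j : Fin N, c (j : ℕ) * 1)) :=
    tendsto_finsetSum _ fun j _ ↦
      (tendsto_sqrt_mul_tsum_exp_shifted_gaussian hu _).const_mul _
  rw [← Fin.sum_univ_eq_sum_range (fun j ↦ c (j : ℕ))]
  simp_rw [mul_one] at h1
  refine h1.congr' ?_
  filter_upwards [hu.eventually_gt_atTop 0] with t ht
  have hterm (m : ℤ) (j : Fin N) :
      c (m * N + (j : ℕ)) *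
        cexp (-Real.pi * (u t / N ^ 2) * (((m * N + (j : ℕ) : ℤ) : ℂ) + x) ^ 2) =
      c (j : ℕ) * cexp (-Real.pi * u t * ((m : ℂ) + (((j : ℕ) + x) / N : ℝ)) ^ 2) := by
    rw [hc]
    congr 2
    push_cast
    field_simp
    ring
  have hsum (j : Fin N) : Summable fun m : ℤ ↦
      c (j : ℕ) * cexp (-Real.pi * u t * ((m : ℂ) + (((j : ℕ) + x) / N : ℝ)) ^ 2) :=
    (summable_exp_shifted_gaussian (re_pos_of_inv_re_pos ht) _).mul_left _
  have hhas : HasSum (fun p : Fin N × ℤ ↦ c (p.1 : ℕ) *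
      cexp (-Real.pi * u t * ((p.2 : ℂ) + (((p.1 : ℕ) + x) / N : ℝ)) ^ 2))
      (∑ j : Fin N, ∑' m : ℤ, c (j : ℕ) *
        cexp (-Real.pi * u t * ((m : ℂ) + (((j : ℕ) + x) / N : ℝ)) ^ 2)) := by
    have hS : Summable (fun p : Fin N × ℤ ↦ c (p.1 : ℕ) *
      cexp (-Real.pi * u t * ((p.2 : ℂ) + (((p.1 : ℕ) + x) / N : ℝ)) ^ 2)) := by
      apply Summable.of_norm
      rw [summable_prod_of_nonneg (fun _ ↦ norm_nonneg _)]
      exact ⟨fun j ↦ (hsum j).norm, (hasSum_fintype _).summable⟩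
    have := hS.hasSum
    rwa [hS.tsum_prod, tsum_fintype] at this
  have htot : ∑' n : ℤ, c n * cexp (-Real.pi * (u t / N ^ 2) * ((n : ℂ) + x) ^ 2) =
      ∑ j : Fin N, ∑' m : ℤ, c (j : ℕ) *
        cexp (-Real.pi * u t * ((m : ℂ) + (((j : ℕ) + x) / N : ℝ)) ^ 2) := by
    rw [← hhas.tsum_eq, ← ((Equiv.prodComm _ _).trans (Int.divModEquiv N).symm).tsum_eq]
    refine tsum_congr fun p ↦ ?_
    rw [← hterm p.2 p.1]
    simp [Int.divModEquiv]
  rw [htot, Finset.mul_sum]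
  refine Finset.sum_congr rfl fun j _ ↦ ?_
  rw [tsum_mul_left]
  ring

lemma exp_gauss_periodic {D : ℕ} (hD : 0 < D) (k : ℕ) (m j : ℤ) :
    cexp (2 * Real.pi * I * (((m * D + j : ℤ) : ℂ) ^ 2 + k * ((m * D + j : ℤ) : ℂ)) / D) =
      cexp (2 * Real.pi * I * ((j : ℂ) ^ 2 + k * (j : ℂ)) / D) := by
  have hD0 : (D : ℂ) ≠ 0 := by exact_mod_cast hD.ne'
  rw [Complex.exp_eq_exp_iff_exists_int]
  refine ⟨m ^ 2 * D + 2 * m * j + k * m, ?_⟩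
  push_cast
  field_simp
  ring

lemma exp_dual_periodic (D k : ℕ) (m j : ℤ) :
    cexp (-(Real.pi * I * D * ((m * (2 : ℕ) + j : ℤ) : ℂ) ^ 2 / 2) +
        Real.pi * I * k * ((m * (2 : ℕ) + j : ℤ) : ℂ)) =
      cexp (-(Real.pi * I * D * (j : ℂ) ^ 2 / 2) + Real.pi * I * k * (j : ℂ)) := by
  rw [Complex.exp_eq_exp_iff_exists_int]
  refine ⟨-D * m ^ 2 - D * m * j + k * m, ?_⟩
  push_cast
  ring

/-- The theta transformation at `2 / D + i t / D ^ 2`, rewritten so that both sides are Gaussian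
means of periodic functions. -/
lemma theta_transformation {D : ℕ} (hD : 0 < D) (k : ℕ) {t : ℝ} (ht : 0 < t) :
    ((t : ℂ) / D ^ 2 - 2 * I / D) ^ (1 / 2 : ℂ) *
      ∑' n : ℤ, cexp (2 * Real.pi * I * ((n : ℂ) ^ 2 + k * (n : ℂ)) / D) *
        cexp (-Real.pi * (t / D ^ 2) * ((n : ℂ) + (0 : ℝ)) ^ 2) =
    cexp (-(Real.pi * I * (k : ℂ) ^ 2 / (2 * D))) *
      ∑' n : ℤ, cexp (-(Real.pi * I * D * (n : ℂ) ^ 2 / 2) + Real.pi * I * k * (n : ℂ)) *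
        cexp (-Real.pi * (t * (1 + t / (2 * D) * I)⁻¹ / (2 : ℕ) ^ 2) *
          ((n : ℂ) + (-(k / D) : ℝ)) ^ 2) := by
  have hD0 : (D : ℂ) ≠ 0 := by exact_mod_cast hD.ne'
  have hDr : (0 : ℝ) < D := by exact_mod_cast hD
  have ht0 : (t : ℂ) ≠ 0 := by exact_mod_cast ht.ne'
  set a : ℂ := (t : ℂ) / D ^ 2 - 2 * I / D with ha
  have hare : 0 < a.re := by
    have : a = ((t / D ^ 2 : ℝ) : ℂ) + ((-2 / D : ℝ) : ℂ) * I := by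
      rw [ha]; push_cast; ring
    rw [this, add_re, ofReal_re, re_ofReal_mul, I_re]
    have : 0 < t / (D : ℝ) ^ 2 := by positivity
    linarith
  have ha0 : a ≠ 0 := fun h ↦ by simp [h] at hare
  have hw0 : (1 + t / (2 * D) * I : ℂ) ≠ 0 := fun h ↦ by
    have h2 : (1 + ((t / (2 * D) : ℝ) : ℂ) * I : ℂ) = 0 := by rw [← h]; push_cast; ring
    have := congrArg Complex.re h2
    rw [add_re, re_ofReal_mul, I_re] at this
    simp at this
  have hinv : 1 / a = t * (1 + t / (2 * D) * I)⁻¹ / 4 + I * D / 2 := by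
    have hat : (t : ℂ) = -(2 * I * D) * ((1 + t / (2 * D) * I) - 1) := by
      field_simp
      linear_combination (t : ℂ) * I_sq
    have haw : a = -(2 * I) * (1 + t / (2 * D) * I) / D := by
      rw [ha]
      field_simp
      linear_combination (t : ℂ) * I_sq
    rw [div_eq_iff ha0, haw]
    generalize (1 + t / (2 * D) * I : ℂ) = q at hat hw0
    rw [hat]
    field_simp
    linear_combination 4 * I_sq
  have hapow : a ^ (1 / 2 : ℂ) ≠ 0 := by
    simp [Complex.cpow_eq_zero_iff, ha0]
  have hl (n : ℤ) : cexp (2 * Real.pi * I * ((n : ℂ) ^ 2 + k * (n : ℂ)) / D) *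
        cexp (-Real.pi * (t / D ^ 2) * ((n : ℂ) + (0 : ℝ)) ^ 2) =
      cexp (-Real.pi * a * n ^ 2 + 2 * Real.pi * (I * k / D) * n) := by
    rw [← Complex.exp_add]
    congr 1
    rw [ha]
    push_cast
    ring
  simp_rw [hl]
  rw [Complex.tsum_exp_neg_quadratic hare, ← mul_assoc, mul_one_div_cancel hapow, one_mul,
    ← tsum_mul_left]
  refine tsum_congr fun n ↦ ?_
  rw [← Complex.exp_add, ← Complex.exp_add]
  congr 1
  rw [show -(Real.pi : ℂ) / a = -Real.pi * (1 / a) by ring, hinv]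
  rw [show I * (I * k / D) = -(k / D : ℂ) by linear_combination (k / D : ℂ) * I_sq]
  generalize (1 + t / (2 * D) * I : ℂ)⁻¹ = w
  push_cast
  field_simp
  ring

lemma quadratic_reciprocity_sum {D : ℕ} (hD : 0 < D) (k : ℕ) :
    (-(2 * I / D)) ^ (1 / 2 : ℂ) *
      ∑ j ∈ Finset.range D, cexp (2 * Real.pi * I * ((j : ℂ) ^ 2 + k * (j : ℂ)) / D) =
    cexp (-(Real.pi * I * (k : ℂ) ^ 2 / (2 * D))) *
      (1 + cexp (-(Real.pi * I * D / 2) + Real.pi * I * k)) := by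
  have hD0 : (D : ℂ) ≠ 0 := by exact_mod_cast hD.ne'
  have hDr : (0 : ℝ) < D := by exact_mod_cast hD
  have hinv : Tendsto (fun t : ℝ ↦ t⁻¹) (𝓝[>] 0) atTop := tendsto_inv_nhdsGT_zero
  have hu1 : Tendsto (fun t : ℝ ↦ ((t : ℂ))⁻¹.re) (𝓝[>] 0) atTop := by
    simpa [← ofReal_inv] using hinv
  have hu2 : Tendsto (fun t : ℝ ↦ ((t : ℂ) * (1 + t / (2 * D) * I)⁻¹)⁻¹.re) (𝓝[>] 0) atTop := by
    refine hinv.congr' ?_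
    filter_upwards [self_mem_nhdsWithin] with t ht
    have ht0 : (t : ℂ) ≠ 0 := by exact_mod_cast (ne_of_gt ht)
    have : ((t : ℂ) * (1 + t / (2 * D) * I)⁻¹)⁻¹ =
        ((t⁻¹ : ℝ) : ℂ) + ((1 / (2 * D) : ℝ) : ℂ) * I := by
      rw [mul_inv, inv_inv]; push_cast; field_simp
    rw [this, add_re, ofReal_re, re_ofReal_mul, I_re, mul_zero, add_zero]
  have hA := tendsto_sqrt_mul_tsum_periodic_gaussian hu1 0 hD
    (c := fun n ↦ cexp (2 * Real.pi * I * ((n : ℂ) ^ 2 + k * (n : ℂ)) / D))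
    (exp_gauss_periodic hD k)
  have hB := tendsto_sqrt_mul_tsum_periodic_gaussian hu2 (-(k / D)) Nat.two_pos
    (c := fun n ↦ cexp (-(Real.pi * I * D * (n : ℂ) ^ 2 / 2) + Real.pi * I * k * (n : ℂ)))
    (exp_dual_periodic D k)
  have hc : Tendsto (fun t : ℝ ↦ ((1 + t / (2 * D) * I : ℂ)⁻¹) ^ (1 / 2 : ℂ)) (𝓝[>] 0) (𝓝 1) := by
    have : ContinuousAt (fun t : ℝ ↦ ((1 + t / (2 * D) * I : ℂ)⁻¹) ^ (1 / 2 : ℂ)) 0 := by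
      refine ContinuousAt.cpow (ContinuousAt.inv₀ (by fun_prop) (by simp)) continuousAt_const ?_
      simp
    simpa [ContinuousAt] using this.tendsto.mono_left nhdsWithin_le_nhds
  have ha : Tendsto (fun t : ℝ ↦ ((t : ℂ) / D ^ 2 - 2 * I / D) ^ (1 / 2 : ℂ)) (𝓝[>] 0)
      (𝓝 ((-(2 * I / D)) ^ (1 / 2 : ℂ))) := by
    have : ContinuousAt (fun t : ℝ ↦ ((t : ℂ) / D ^ 2 - 2 * I / D) ^ (1 / 2 : ℂ)) 0 := by
      refine ContinuousAt.cpow (by fun_prop) continuousAt_const ?_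
      right
      rw [show ((0 : ℝ) : ℂ) / D ^ 2 - 2 * I / D = ((-2 / D : ℝ) : ℂ) * I by push_cast; ring,
        im_ofReal_mul, I_im, mul_one]
      exact (div_neg_of_neg_of_pos (by norm_num) hDr).ne
    simpa [ContinuousAt] using this.tendsto.mono_left nhdsWithin_le_nhds
  have hL := (hc.mul ha).mul hA
  have hR := hB.const_mul (cexp (-(Real.pi * I * (k : ℂ) ^ 2 / (2 * D))))
  have heq := tendsto_nhds_unique (hL.congr' ?_) hR
  · rw [Finset.sum_range_succ, Finset.sum_range_one] at heq
    simpa using heq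
  · filter_upwards [self_mem_nhdsWithin] with t ht
    have ht' : (0 : ℝ) < t := ht
    have h := theta_transformation hD k ht'
    have hmul : ((t : ℂ) * (1 + t / (2 * D) * I)⁻¹) ^ (1 / 2 : ℂ) =
        (t : ℂ) ^ (1 / 2 : ℂ) * ((1 + t / (2 * D) * I)⁻¹) ^ (1 / 2 : ℂ) := by
      have hw := (re_pos_of_inv_re_pos (u := (1 + t / (2 * D) * I : ℂ)⁻¹) (by
        rw [inv_inv, show (1 + t / (2 * D) * I : ℂ) = 1 + ((t / (2 * D) : ℝ) : ℂ) * I by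
          push_cast; ring, add_re, re_ofReal_mul, I_re]
        simp))
      have hw0 : (1 + t / (2 * D) * I : ℂ)⁻¹ ≠ 0 := fun h ↦ by simp [h] at hw
      have ht0 : (t : ℂ) ≠ 0 := by exact_mod_cast ht'.ne'
      rw [cpow_def_of_ne_zero (mul_ne_zero ht0 hw0), cpow_def_of_ne_zero ht0,
        cpow_def_of_ne_zero hw0, Complex.log_ofReal_mul ht' hw0, ← Complex.exp_add,
        Complex.ofReal_log ht'.le, add_mul]
    rw [hmul]
    linear_combination (t : ℂ) ^ (1 / 2 : ℂ) * ((1 + t / (2 * D) * I)⁻¹) ^ (1 / 2 : ℂ) * h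

lemma neg_two_I_div_cpow_half {D : ℕ} (hD : 0 < D) :
    (-(2 * I / D)) ^ (1 / 2 : ℂ) = Real.sqrt 2 / Real.sqrt D * cexp (-(Real.pi * I / 4)) := by
  have hDr : (0 : ℝ) < D := by exact_mod_cast hD
  have hsq : (Real.sqrt 2 / Real.sqrt D * cexp (-(Real.pi * I / 4))) ^ 2 = -(2 * I / D) := by
    rw [mul_pow, div_pow, ← ofReal_pow, ← ofReal_pow, Real.sq_sqrt zero_le_two,
      Real.sq_sqrt hDr.le, ← Complex.exp_nat_mul,
      show ((2 : ℕ) : ℂ) * -(Real.pi * I / 4) = -(Real.pi / 2 * I) by push_cast; ring,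
      Complex.exp_neg, Complex.exp_pi_div_two_mul_I, Complex.inv_I]
    push_cast
    ring
  have hre : 0 < (Real.sqrt 2 / Real.sqrt D * cexp (-(Real.pi * I / 4)) : ℂ).re := by
    rw [← ofReal_div, re_ofReal_mul,
      show -(Real.pi * I / 4 : ℂ) = ((-(Real.pi / 4) : ℝ) : ℂ) * I by push_cast; ring,
      Complex.exp_ofReal_mul_I_re, Real.cos_neg, Real.cos_pi_div_four]
    positivity
  rw [← hsq, one_div, Complex.sq_cpow_two_inv hre]

lemma one_add_exp_dual {D : ℕ} (hOdd : Odd D) (k : ℕ) :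
    1 + cexp (-(Real.pi * I * D / 2) + Real.pi * I * k) = 1 - I ^ (2 * k + D) := by
  have h1 : cexp (Real.pi * I * k) = (-1) ^ k := by
    rw [mul_comm, Complex.exp_nat_mul, Complex.exp_pi_mul_I]
  have h2 : cexp (-(Real.pi * I * D / 2)) = (-I) ^ D := by
    rw [show -(Real.pi * I * D / 2 : ℂ) = D * -(Real.pi / 2 * I) by ring, Complex.exp_nat_mul,
      Complex.exp_neg, Complex.exp_pi_div_two_mul_I, Complex.inv_I]
  rw [Complex.exp_add, h1, h2, hOdd.neg_pow, pow_add, pow_mul, I_sq]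
  ring

/-- Evaluation of the generalized quadratic Gauss sum for odd `D`:
`∑_{j=0}^{D−1} exp(2πi(j² + kj)/D)
  = √D · e^{πi/4} · e^{−πik²/(2D)} · (1 − i^{2k+D})/√2`. -/
theorem gauss_sum_odd (D : ℕ) (hD : 0 < D) (hOdd : Odd D) (k : ℕ) :
    ∑ j ∈ Finset.range D,
        Complex.exp (2 * (Real.pi : ℂ) * Complex.I * ((j : ℂ) ^ 2 + (k : ℂ) * (j : ℂ)) / (D : ℂ)) =
      (Real.sqrt D : ℂ) * Complex.exp ((Real.pi : ℂ) * Complex.I / 4) *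
        Complex.exp (-((Real.pi : ℂ) * Complex.I * (k : ℂ) ^ 2 / (2 * (D : ℂ)))) *
        ((1 - Complex.I ^ (2 * k + D)) / (Real.sqrt 2 : ℂ)) := by
  have h := quadratic_reciprocity_sum hD k
  rw [neg_two_I_div_cpow_half hD, one_add_exp_dual hOdd] at h
  have hs2 : (Real.sqrt 2 : ℂ) ≠ 0 := by
    exact_mod_cast (Real.sqrt_pos.mpr two_pos).ne'
  have hsD : (Real.sqrt D : ℂ) ≠ 0 := by
    exact_mod_cast (Real.sqrt_pos.mpr (by exact_mod_cast hD : (0 : ℝ) < D)).ne'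
  rw [Complex.exp_neg] at h
  have he := Complex.exp_ne_zero (Real.pi * I / 4)
  field_simp at h ⊢
  linear_combination h
end
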